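/- Let (u_v)_{v≥0} be a sequence of reals with u_0 = 1 such that (Δ^k u)_v ≥ 0 for all k, v ≥ 0, where (Δu)_v = u_v − u_{v+1}. Then there exists a probability measure μ on [0,1] such that u_v = ∫_0^1 x^v dμ(x) for all v ≥ 0 (Hausdorff moment problem). -/

import Mathlib

open MeasureTheory

/-- Forward difference operator `(Δu)_v = u_v - u_{v+1}`. -/
def fdiff (u : ℕ → ℝ) : ℕ → ℝ := fun v => u v - u (v + 1)

/-!
Let `L` be the linear functional on `ℝ[X]` with `L (X ^ v) = u v`. Multiplying the argument of `L`
by `1 - X` amounts to applying `Δ` to `u`, so complete monotonicity of `u` says that `L` is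
nonnegative on the Bernstein polynomials `b n k = (n.choose k) X ^ k (1 - X) ^ (n - k)`. Placing
mass `L (b n k)` at `k / n` gives measures on `[0,1]` of total mass `L 1`, whose `v`-th moment
`∑ k, L (b n k) (k / n) ^ v` tends to `L (X ^ v)`: it is within `O(1 / n)` of the factorial moment
`∑ k, L (b n k) k (k - 1) ⋯ (k - v + 1) / n ^ v`, which equals
`n (n - 1) ⋯ (n - v + 1) / n ^ v * L (X ^ v)`. Any weak cluster point of these measures represents
`L`.
-/

open Filter Polynomial Topology unitInterval

section BernsteinPolynomial

variable (R : Type*) [CommRing R]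

lemma succ_smul_bernsteinPolynomial_succ (n k : ℕ) :
    (k + 1) • bernsteinPolynomial R (n + 1) (k + 1) =
      (n + 1) • (X * bernsteinPolynomial R n k) := by
  have hchoose : ((n + 1 : ℕ) : R[X]) * n.choose k = (n + 1).choose (k + 1) * (k + 1 : ℕ) :=
    mod_cast congrArg (Nat.cast : ℕ → R[X]) (Nat.add_one_mul_choose_eq n k)
  simp only [bernsteinPolynomial, nsmul_eq_mul, Nat.add_sub_add_right]
  linear_combination (-(X ^ (k + 1) * (1 - X) ^ (n - k)) : R[X]) * hchoose

theorem sum_descFactorial_smul_bernsteinPolynomial (n v : ℕ) :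
    ∑ k ∈ Finset.range (n + 1), k.descFactorial v • bernsteinPolynomial R n k =
      n.descFactorial v • X ^ v := by
  induction v generalizing n with
  | zero => simpa using bernsteinPolynomial.sum R n
  | succ v ih =>
    cases n with
    | zero => simp
    | succ n =>
      calc ∑ k ∈ Finset.range (n + 1 + 1),
            k.descFactorial (v + 1) • bernsteinPolynomial R (n + 1) k
          = ∑ k ∈ Finset.range (n + 1),
              k.descFactorial v • ((k + 1) • bernsteinPolynomial R (n + 1) (k + 1)) := by
            simp only [Finset.sum_range_succ' _ (n + 1), Nat.zero_descFactorial_succ, zero_smul,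
              add_zero, Nat.succ_descFactorial_succ, mul_smul, smul_comm (_ + 1)]
        _ = (n + 1) • (X * ∑ k ∈ Finset.range (n + 1),
              k.descFactorial v • bernsteinPolynomial R n k) := by
            simp only [succ_smul_bernsteinPolynomial_succ, Finset.mul_sum, Finset.smul_sum,
              mul_smul_comm, smul_comm (n + 1)]
        _ = (n + 1).descFactorial (v + 1) • X ^ (v + 1) := by
            rw [ih, mul_smul_comm, ← pow_succ', smul_smul, Nat.succ_descFactorial_succ]

variable {R} {M : Type*} [AddCommMonoid M] [Module R M] (L : R[X] →ₗ[R] M)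

lemma sum_map_bernsteinPolynomial (n : ℕ) :
    ∑ k : Fin (n + 1), L (bernsteinPolynomial R n k) = L 1 := by
  rw [← bernsteinPolynomial.sum R n, map_sum, Finset.sum_range]

lemma sum_descFactorial_smul_map_bernsteinPolynomial (n v : ℕ) :
    ∑ k : Fin (n + 1), (k : ℕ).descFactorial v • L (bernsteinPolynomial R n k) =
      n.descFactorial v • L (X ^ v) := by
  simp only [← map_nsmul, ← sum_descFactorial_smul_bernsteinPolynomial, map_sum, Finset.sum_range]

end BernsteinPolynomial

section DescFactorial

lemma mul_pow_le_mul_descFactorial_add {k n : ℕ} (hkn : k ≤ n) (v : ℕ) :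
    n * k ^ v ≤ n * k.descFactorial v + v.choose 2 * n ^ v := by
  induction v with
  | zero => simp
  | succ v ih =>
    have hsucc : k * k.descFactorial v ≤ k.descFactorial (v + 1) + v * n ^ v := calc
      k * k.descFactorial v ≤ (k - v + v) * k.descFactorial v := by gcongr; omega
      _ = k.descFactorial (v + 1) + v * k.descFactorial v := by
        rw [Nat.descFactorial_succ, add_mul]
      _ ≤ k.descFactorial (v + 1) + v * n ^ v := by
        gcongr
        exact (k.descFactorial_le_pow v).trans (by gcongr)
    calc n * k ^ (v + 1) = k * (n * k ^ v) := by ring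
      _ ≤ k * (n * k.descFactorial v + v.choose 2 * n ^ v) := by gcongr
      _ = n * (k * k.descFactorial v) + k * (v.choose 2 * n ^ v) := by ring
      _ ≤ n * (k.descFactorial (v + 1) + v * n ^ v) + n * (v.choose 2 * n ^ v) := by gcongr
      _ = n * k.descFactorial (v + 1) + (v + 1).choose 2 * n ^ (v + 1) := by
        rw [Nat.choose_succ_succ' v 1, Nat.choose_one_right]
        ring

variable {K : Type*} [Field K] [LinearOrder K] [IsStrictOrderedRing K]

lemma descFactorial_div_pow_le_div_pow (k n v : ℕ) :
    (k.descFactorial v : K) / n ^ v ≤ ((k : K) / n) ^ v := by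
  rw [div_pow]
  gcongr
  exact_mod_cast k.descFactorial_le_pow v

lemma div_pow_le_descFactorial_div_pow_add {k n : ℕ} (hkn : k ≤ n) (v : ℕ) :
    ((k : K) / n) ^ v ≤ k.descFactorial v / n ^ v + v.choose 2 / n := by
  rcases n.eq_zero_or_pos with rfl | hn
  · obtain rfl : k = 0 := Nat.le_zero.1 hkn
    cases v <;> simp
  calc ((k : K) / n) ^ v = n * k ^ v / (n * n ^ v) := by rw [div_pow]; field_simp
    _ ≤ (n * k.descFactorial v + v.choose 2 * n ^ v) / (n * n ^ v) := by
      gcongr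
      exact_mod_cast mul_pow_le_mul_descFactorial_add hkn v
    _ = k.descFactorial v / n ^ v + v.choose 2 / n := by field_simp

lemma tendsto_descFactorial_div_pow (v : ℕ) :
    Tendsto (fun n : ℕ => (n.descFactorial v : ℝ) / n ^ v) atTop (𝓝 1) := by
  refine (Asymptotics.isEquivalent_iff_tendsto_one ?_).1 (isEquivalent_descFactorial v)
  filter_upwards [eventually_gt_atTop 0] with n hn
  positivity

end DescFactorial

section BernsteinMeasure

/-- The discrete measure on `[0,1]` with mass `L (bernsteinPolynomial ℝ n k)` at `k / n`, the `n`-th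
approximation to a measure representing the functional `L`. Negative masses are truncated to `0`. -/
noncomputable def bernsteinMeasure (L : ℝ[X] →ₗ[ℝ] ℝ) (n : ℕ) : FiniteMeasure I :=
  ⟨∑ k : Fin (n + 1), (L (bernsteinPolynomial ℝ n k)).toNNReal • Measure.dirac (bernstein.z k),
    inferInstance⟩

variable {L : ℝ[X] →ₗ[ℝ] ℝ}

lemma integral_bernsteinMeasure (hL : ∀ n k, 0 ≤ L (bernsteinPolynomial ℝ n k)) (n : ℕ)
    (f : I → ℝ) :
    ∫ x, f x ∂(bernsteinMeasure L n : Measure I) =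
      ∑ k : Fin (n + 1), L (bernsteinPolynomial ℝ n k) * f (bernstein.z k) := by
  have hint (k : Fin (n + 1)) : Integrable f (Measure.dirac (bernstein.z k)) :=
    integrable_dirac (by simp)
  rw [bernsteinMeasure, FiniteMeasure.toMeasure_mk,
    integral_finsetSum_measure fun k _ => (hint k).smul_measure_nnreal]
  simp [integral_smul_nnreal_measure, NNReal.smul_def, hL]

lemma mass_bernsteinMeasure (hL : ∀ n k, 0 ≤ L (bernsteinPolynomial ℝ n k)) (n : ℕ) :
    ((bernsteinMeasure L n).mass : ℝ) = L 1 := by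
  simpa [sum_map_bernsteinPolynomial] using integral_bernsteinMeasure hL n 1

lemma tendsto_integral_pow_bernsteinMeasure
    (hL : ∀ n k, 0 ≤ L (bernsteinPolynomial ℝ n k)) (v : ℕ) :
    Tendsto (fun n => ∫ x : I, (x : ℝ) ^ v ∂(bernsteinMeasure L n : Measure I)) atTop
      (𝓝 (L (X ^ v))) := by
  have hfactorial (n : ℕ) : (n.descFactorial v : ℝ) / n ^ v * L (X ^ v) =
      ∑ k : Fin (n + 1), L (bernsteinPolynomial ℝ n k) * ((k : ℕ).descFactorial v / n ^ v) := by
    rw [div_mul_eq_mul_div, ← nsmul_eq_mul, ← sum_descFactorial_smul_map_bernsteinPolynomial,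
      Finset.sum_div]
    exact Finset.sum_congr rfl fun k _ => by rw [nsmul_eq_mul]; ring
  have hmain : Tendsto (fun n : ℕ => (n.descFactorial v : ℝ) / n ^ v * L (X ^ v)) atTop
      (𝓝 (L (X ^ v))) := by
    simpa using (tendsto_descFactorial_div_pow v).mul_const (L (X ^ v))
  have herror : Tendsto (fun n : ℕ => L 1 * ((v.choose 2 : ℝ) / n)) atTop (𝓝 0) := by
    simpa using (tendsto_const_div_atTop_nhds_zero_nat (v.choose 2 : ℝ)).const_mul (L 1)
  refine tendsto_of_tendsto_of_tendsto_of_le_of_le hmain (by simpa using hmain.add herror)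
    (fun n => ?lower) (fun n => ?upper)
  case lower =>
    simp only [integral_bernsteinMeasure hL, hfactorial]
    gcongr with k
    exacts [hL n k, descFactorial_div_pow_le_div_pow k n v]
  case upper =>
    simp only [integral_bernsteinMeasure hL, hfactorial, ← sum_map_bernsteinPolynomial L n,
      Finset.sum_mul, ← Finset.sum_add_distrib, ← mul_add]
    gcongr with k
    exacts [hL n k, div_pow_le_descFactorial_div_pow_add k.is_le v]

theorem tendsto_integral_eval_bernsteinMeasure
    (hL : ∀ n k, 0 ≤ L (bernsteinPolynomial ℝ n k)) (p : ℝ[X]) :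
    Tendsto (fun n => ∫ x : I, p.eval (x : ℝ) ∂(bernsteinMeasure L n : Measure I)) atTop
      (𝓝 (L p)) := by
  induction p using Polynomial.induction_on' with
  | add p q hp hq =>
    simpa only [integral_bernsteinMeasure hL, eval_add, mul_add, Finset.sum_add_distrib, map_add]
      using hp.add hq
  | monomial v a =>
    simpa only [← smul_X_eq_monomial, eval_smul, eval_pow, eval_X, smul_eq_mul,
      integral_const_mul, map_smul]
      using (tendsto_integral_pow_bernsteinMeasure hL v).const_mul a

theorem exists_finiteMeasure_forall_eq_integral_eval
    (hL : ∀ n k, 0 ≤ L (bernsteinPolynomial ℝ n k)) :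
    ∃ ν : FiniteMeasure I, ∀ p : ℝ[X], L p = ∫ x : I, p.eval (x : ℝ) ∂(ν : Measure I) := by
  have hmass (n : ℕ) : (bernsteinMeasure L n).mass ≤ (L 1).toNNReal := by
    rw [← mass_bernsteinMeasure hL n, Real.toNNReal_coe]
  obtain ⟨ν, -, hν⟩ := (isCompact_setOfPred_finiteMeasure_le_of_compactSpace I
    (L 1).toNNReal).ultrafilter_le_nhds ((hyperfilter ℕ).map (bernsteinMeasure L))
    (by simp [hmass])
  have hconv : Tendsto (bernsteinMeasure L) (hyperfilter ℕ) (𝓝 ν) := hν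
  refine ⟨ν, fun p => ?_⟩
  exact tendsto_nhds_unique
    ((tendsto_integral_eval_bernsteinMeasure hL p).mono_left Nat.hyperfilter_le_atTop)
    (FiniteMeasure.tendsto_iff_forall_integral_tendsto.1 hconv
      (.mkOfCompact (p.toContinuousMapOn I)))

end BernsteinMeasure

section MomentFunctional

/-- The moment functional of a sequence `u`: the linear functional on polynomials whose value at
`X ^ v` is `u v`. -/
noncomputable def momentFunctional {R : Type*} [CommSemiring R] (u : ℕ → R) : R[X] →ₗ[R] R :=
  (Polynomial.basisMonomials R).constr R u

lemma momentFunctional_X_pow {R : Type*} [CommSemiring R] (u : ℕ → R) (v : ℕ) :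
    momentFunctional u (X ^ v) = u v := by
  simpa [momentFunctional, X_pow_eq_monomial] using
    (Polynomial.basisMonomials R).constr_basis R u v

lemma momentFunctional_mul_one_sub_X (u : ℕ → ℝ) (p : ℝ[X]) :
    momentFunctional u (p * (1 - X)) = momentFunctional (fdiff u) p := by
  induction p using Polynomial.induction_on' with
  | add p q hp hq => rw [add_mul, map_add, map_add, hp, hq]
  | monomial v a =>
    simp only [← smul_X_eq_monomial, smul_mul_assoc, mul_one_sub, ← pow_succ, map_smul, map_sub,
      momentFunctional_X_pow, fdiff, smul_sub]

lemma momentFunctional_mul_one_sub_X_pow (u : ℕ → ℝ) (p : ℝ[X]) (k : ℕ) :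
    momentFunctional u (p * (1 - X) ^ k) = momentFunctional (fdiff^[k] u) p := by
  induction k generalizing u with
  | zero => simp
  | succ k ih =>
    rw [pow_succ, ← mul_assoc, momentFunctional_mul_one_sub_X, ih, Function.iterate_succ_apply]

lemma momentFunctional_bernsteinPolynomial (u : ℕ → ℝ) (n k : ℕ) :
    momentFunctional u (bernsteinPolynomial ℝ n k) = n.choose k * fdiff^[n - k] u k := by
  rw [bernsteinPolynomial, momentFunctional_mul_one_sub_X_pow, ← nsmul_eq_mul, map_nsmul,
    momentFunctional_X_pow, nsmul_eq_mul]

end MomentFunctional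

theorem stmt9_general (u : ℕ → ℝ) (hmono : ∀ k v : ℕ, 0 ≤ (fdiff^[k] u) v) :
    ∃ μ : Measure ℝ, IsFiniteMeasure μ ∧ μ (Set.Icc (0 : ℝ) 1)ᶜ = 0 ∧
      ∀ v : ℕ, u v = ∫ x in Set.Icc (0 : ℝ) 1, x ^ v ∂μ := by
  have hL (n k : ℕ) : 0 ≤ momentFunctional u (bernsteinPolynomial ℝ n k) := by
    rw [momentFunctional_bernsteinPolynomial]
    exact mul_nonneg (Nat.cast_nonneg _) (hmono _ _)
  obtain ⟨ν, hν⟩ := exists_finiteMeasure_forall_eq_integral_eval hL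
  have hval : MeasurableEmbedding ((↑) : I → ℝ) := .subtype_coe measurableSet_Icc
  refine ⟨(ν : Measure I).map (↑), inferInstance, ?_, fun v => ?_⟩
  · simp [hval.map_apply]
  · simp [← momentFunctional_X_pow u v, hν, hval.setIntegral_map]

/-- Hausdorff moment problem: a completely monotone sequence with `u 0 = 1` is the
moment sequence of a probability measure on `[0,1]`. -/
theorem stmt9 (u : ℕ → ℝ) (h0 : u 0 = 1)
    (hmono : ∀ k v : ℕ, 0 ≤ (fdiff^[k] u) v) :
    ∃ μ : Measure ℝ, IsProbabilityMeasure μ ∧ μ (Set.Icc (0 : ℝ) 1)ᶜ = 0 ∧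
      ∀ v : ℕ, u v = ∫ x in Set.Icc (0 : ℝ) 1, x ^ v ∂μ := by
  obtain ⟨μ, _, hsupp, hmom⟩ := stmt9_general u hmono
  have hIcc : μ.restrict (Set.Icc 0 1) = μ := Measure.restrict_eq_self_of_ae_mem hsupp
  exact ⟨μ, isProbabilityMeasure_iff_real.2 (by simpa [h0, hIcc] using (hmom 0).symm), hsupp, hmom⟩
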